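/- In the ZF algebra A_R (no spectral parameter), if an element L (valued in A_R ⊗ End(ℂᴺ)) is well-bred, i.e. L₁a₂ = R₂₁a₂L₁ and L₁a₂† = a₂†R₁₂L₁, then L†L is central in A_R, where L† is obtained by applying the adjoint anti-automorphism entrywise. -/

import Mathlib

open scoped BigOperators

noncomputable section

/-- Unitarity `R₁₂ R₂₁ = I` of the R-matrix, in components. -/
def UnitarityC (N : ℕ) (R : Fin N × Fin N → Fin N × Fin N → ℂ) : Prop :=
  ∀ i j k l : Fin N,
    (∑ p : Fin N, ∑ q : Fin N, R (i, j) (p, q) * R (q, p) (l, k)) =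
      if i = k ∧ j = l then 1 else 0

/-- The Yang–Baxter equation `R₁₂ R₁₃ R₂₃ = R₂₃ R₁₃ R₁₂`, in components. -/
def YBEC (N : ℕ) (R : Fin N × Fin N → Fin N × Fin N → ℂ) : Prop :=
  ∀ i j m k l n : Fin N,
    (∑ p : Fin N, ∑ q : Fin N, ∑ t : Fin N,
        R (i, j) (p, q) * R (p, m) (k, t) * R (q, t) (l, n)) =
      ∑ p : Fin N, ∑ q : Fin N, ∑ t : Fin N,
        R (j, m) (q, t) * R (i, t) (p, n) * R (p, q) (k, l)

/-- The Zamolodchikov–Faddeev exchange relations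
`a₁a₂ = R₂₁a₂a₁`, `a₁†a₂† = a₂†a₁†R₂₁`, `a₁a₂† = a₂†R₁₂a₁ + δ₁₂`,
in components, for generators `a i`, `ad i` of a `ℂ`-algebra `A`. -/
def IsZF (N : ℕ) {A : Type*} [Ring A] [Algebra ℂ A]
    (R : Fin N × Fin N → Fin N × Fin N → ℂ) (a ad : Fin N → A) : Prop :=
  (∀ i j : Fin N, a i * a j =
      ∑ k : Fin N, ∑ l : Fin N, R (j, i) (k, l) • (a k * a l)) ∧
  (∀ i j : Fin N, ad i * ad j =
      ∑ k : Fin N, ∑ l : Fin N, R (k, l) (j, i) • (ad k * ad l)) ∧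
  (∀ i j : Fin N, a i * ad j =
      (∑ k : Fin N, ∑ l : Fin N, R (i, k) (l, j) • (ad k * a l)) +
        if i = j then 1 else 0)

/-- The well-bred conditions `L₁a₂ = R₂₁a₂L₁` and `L₁a₂† = a₂†R₁₂L₁`,
in components, for `L ∈ A_R ⊗ End(ℂᴺ)`. -/
def IsWellBred (N : ℕ) {A : Type*} [Ring A] [Algebra ℂ A]
    (R : Fin N × Fin N → Fin N × Fin N → ℂ) (a ad : Fin N → A)
    (L : Fin N → Fin N → A) : Prop :=
  (∀ i j m : Fin N, L i j * a m =
      ∑ p : Fin N, ∑ q : Fin N, R (m, i) (q, p) • (a q * L p j)) ∧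
  (∀ i j m : Fin N, L i j * ad m =
      ∑ p : Fin N, ∑ q : Fin N, R (i, q) (p, m) • (ad q * L p j))

/-!
For a column `u` of a well-bred `L`, the element `z = a† ⬝ᵥ u` commutes with every `aᵢ†` and
satisfies `[aᵢ, z] = uᵢ`. Taking the adjoint of `a₁a₂† = a₂†R₁₂a₁ + δ₁₂` shows that `a₂†R₁₂a₁` does
not change when `R₁₂` is replaced by its adjoint `R₂₁†`; commuting with `z` turns this into the same
symmetry of `a₂†R₁₂u₁`. By this symmetry, moving `aᵢ` or `aᵢ†` past `L` from the right end of `L†L`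
gives the same expression as moving it past `L†` from the left end.
-/

open scoped Matrix

section Exchange

variable {ι 𝕜 A : Type*} [CommSemiring 𝕜]

/-- The adjoint `R₂₁†` of an R-matrix with flipped legs: the transpose, with `σ` applied to the
entries. Here `σ` is the identity for a linear adjoint and conjugation for an antilinear one. -/
def flipAdjoint (σ : 𝕜 →+* 𝕜) (R : ι × ι → ι × ι → 𝕜) : ι × ι → ι × ι → 𝕜 :=
  fun p q => σ (R q.swap p.swap)

theorem flipAdjoint_flipAdjoint (σ : 𝕜 →+* 𝕜) [RingHomInvPair σ σ] (R : ι × ι → ι × ι → 𝕜) :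
    flipAdjoint σ (flipAdjoint σ R) = R := by
  funext p q
  simp only [flipAdjoint, Prod.swap_swap, RingHomInvPair.comp_apply_eq]

variable [Fintype ι]

/-- The components of `x₂R₁₂y₁`, the normally ordered product on the right-hand side of
`a₁a₂† = a₂†R₁₂a₁ + δ₁₂`; `i` belongs to the first auxiliary leg and `j` to the second. -/
def exchange [Semiring A] [Algebra 𝕜 A] (R : ι × ι → ι × ι → 𝕜) (x y : ι → A) (i j : ι) : A :=
  ∑ k, ∑ l, R (i, k) (l, j) • (x k * y l)

theorem mul_dotProduct_eq_dotProduct_exchange [Semiring A] [Algebra 𝕜 A]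
    {R : ι × ι → ι × ι → 𝕜} {c x : ι → A} {m : ι}
    (h : ∀ p, c m * x p = ∑ k, ∑ q, R (k, q) (p, m) • (x k * c q)) (y : ι → A) :
    c m * (x ⬝ᵥ y) = x ⬝ᵥ fun k => exchange R c y k m := by
  simp_rw [dotProduct, exchange, Finset.mul_sum, ← mul_assoc, h, Finset.sum_mul, smul_mul_assoc,
    mul_smul_comm, mul_assoc]
  rw [Finset.sum_comm]
  exact Finset.sum_congr rfl fun _ _ => Finset.sum_comm

theorem dotProduct_mul_eq_exchange_dotProduct [Semiring A] [Algebra 𝕜 A]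
    {R : ι × ι → ι × ι → 𝕜} {c y : ι → A} {m : ι}
    (h : ∀ k, y k * c m = ∑ p, ∑ q, R (m, k) (q, p) • (c q * y p)) (x : ι → A) :
    (x ⬝ᵥ y) * c m = exchange R x c m ⬝ᵥ y := by
  simp_rw [dotProduct, exchange, Finset.sum_mul, mul_assoc, h, Finset.mul_sum, smul_mul_assoc,
    mul_smul_comm, mul_assoc]
  exact Finset.sum_comm

theorem lie_exchange [Ring A] [Algebra 𝕜 A] (R : ι × ι → ι × ι → 𝕜) {x : ι → A} {z : A}
    (hx : ∀ k, Commute (x k) z) (y : ι → A) (i j : ι) :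
    ⁅exchange R x y i j, z⁆ = exchange R x (fun l => ⁅y l, z⁆) i j := by
  simp_rw [exchange, Ring.lie_def, Finset.sum_mul, Finset.mul_sum, ← Finset.sum_sub_distrib,
    smul_mul_assoc, mul_smul_comm, ← smul_sub, mul_sub, ← mul_assoc, (hx _).eq]

end Exchange

section ZamolodchikovFaddeev

variable {ι 𝕜 A : Type*} [CommSemiring 𝕜] [Ring A] [Algebra 𝕜 A]
  {R : ι × ι → ι × ι → 𝕜} {a ad u v : ι → A} {σ : 𝕜 →+* 𝕜} {dag : A →ₛₗ[σ] A}

/-- `dag` is a unital `σ`-semilinear anti-endomorphism exchanging annihilation and creation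
operators; semilinearity covers both linear and antilinear adjoints. -/
structure IsZFAdjoint (dag : A →ₛₗ[σ] A) (a ad : ι → A) : Prop where
  map_mul (x y : A) : dag (x * y) = dag y * dag x
  map_one : dag 1 = 1
  map_annihilation (i : ι) : dag (a i) = ad i
  map_creation (i : ι) : dag (ad i) = a i

theorem IsZFAdjoint.comp_annihilation (hdag : IsZFAdjoint dag a ad) : dag ∘ a = ad :=
  funext hdag.map_annihilation

theorem IsZFAdjoint.comp_creation (hdag : IsZFAdjoint dag a ad) : dag ∘ ad = a :=
  funext hdag.map_creation

variable [Fintype ι]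

/-- The exchange relations `a₁†a₂† = a₂†a₁†R₂₁` and `a₁a₂† = a₂†R₁₂a₁ + δ₁₂` of the creation
operators `ad`, over an arbitrary finite index type and arbitrary scalars. -/
structure IsCreationExchange [DecidableEq ι] (R : ι × ι → ι × ι → 𝕜) (a ad : ι → A) : Prop where
  creation_mul_creation (i j : ι) :
    ad i * ad j = ∑ k, ∑ l, R (k, l) (j, i) • (ad k * ad l)
  annihilation_mul_creation (i j : ι) :
    a i * ad j = exchange R ad a i j + if i = j then 1 else 0

/-- The well-bred conditions `u₁a₂ = R₂₁a₂u₁` and `u₁a₂† = a₂†R₁₂u₁` for a single vector `u`; they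
act on the columns of a well-bred matrix separately. -/
structure IsWellBredVector (R : ι × ι → ι × ι → 𝕜) (a ad u : ι → A) : Prop where
  mul_annihilation (i m : ι) :
    u i * a m = ∑ p, ∑ q, R (m, i) (q, p) • (a q * u p)
  mul_creation (i m : ι) : u i * ad m = exchange R ad u i m

theorem map_exchange (hmul : ∀ x y : A, dag (x * y) = dag y * dag x)
    (R : ι × ι → ι × ι → 𝕜) (x y : ι → A) (i j : ι) :
    dag (exchange R x y i j) = exchange (flipAdjoint σ R) (dag ∘ y) (dag ∘ x) j i := by
  simp_rw [exchange, map_sum, map_smulₛₗ, hmul]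
  exact Finset.sum_comm

theorem IsWellBredVector.creation_mul_adjoint (hu : IsWellBredVector R a ad u)
    (hdag : IsZFAdjoint dag a ad) (m p : ι) :
    ad m * dag (u p) =
      ∑ k, ∑ q, flipAdjoint σ R (k, q) (p, m) • (dag (u k) * ad q) := by
  rw [← hdag.map_annihilation, ← hdag.map_mul, hu.mul_annihilation]
  simp_rw [map_sum, map_smulₛₗ, hdag.map_mul, hdag.map_annihilation]
  rfl

variable [DecidableEq ι]

theorem IsCreationExchange.exchange_flipAdjoint (hZF : IsCreationExchange R a ad)
    (hdag : IsZFAdjoint dag a ad) (i j : ι) :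
    exchange (flipAdjoint σ R) ad a i j = exchange R ad a i j := by
  have adjoint_relation :
      a i * ad j = exchange (flipAdjoint σ R) ad a i j + if i = j then 1 else 0 := by
    have h := congrArg dag (hZF.annihilation_mul_creation j i)
    simpa only [hdag.map_mul, hdag.map_annihilation, hdag.map_creation, map_add,
      map_exchange hdag.map_mul, hdag.comp_annihilation, hdag.comp_creation, apply_ite dag,
      hdag.map_one, map_zero, eq_comm (a := j)] using h
  exact add_right_cancel (adjoint_relation.symm.trans (hZF.annihilation_mul_creation i j))

namespace IsWellBredVector

theorem lie_annihilation_dotProduct (hu : IsWellBredVector R a ad u)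
    (hZF : IsCreationExchange R a ad) (m : ι) : ⁅a m, ad ⬝ᵥ u⁆ = u m := by
  rw [Ring.lie_def, sub_eq_iff_eq_add']
  calc a m * (ad ⬝ᵥ u) = ∑ p, (exchange R ad a m p + if m = p then 1 else 0) * u p := by
        simp_rw [dotProduct, Finset.mul_sum, ← mul_assoc, hZF.annihilation_mul_creation]
    _ = exchange R ad a m ⬝ᵥ u + u m := by
        simp [dotProduct, add_mul, Finset.sum_add_distrib]
    _ = (ad ⬝ᵥ u) * a m + u m := by
        rw [dotProduct_mul_eq_exchange_dotProduct fun k => hu.mul_annihilation k m]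

theorem commute_creation_dotProduct (hu : IsWellBredVector R a ad u)
    (hZF : IsCreationExchange R a ad) (m : ι) : Commute (ad m) (ad ⬝ᵥ u) :=
  calc ad m * (ad ⬝ᵥ u) = ad ⬝ᵥ fun k => exchange R ad u k m :=
        mul_dotProduct_eq_dotProduct_exchange (hZF.creation_mul_creation m) u
    _ = (ad ⬝ᵥ u) * ad m := by
        simp_rw [dotProduct, Finset.sum_mul, mul_assoc, hu.mul_creation]

theorem exchange_flipAdjoint (hu : IsWellBredVector R a ad u)
    (hZF : IsCreationExchange R a ad) (hdag : IsZFAdjoint dag a ad) (i j : ι) :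
    exchange (flipAdjoint σ R) ad u i j = exchange R ad u i j := by
  have lie_dotProduct (S : ι × ι → ι × ι → 𝕜) :
      ⁅exchange S ad a i j, ad ⬝ᵥ u⁆ = exchange S ad u i j := by
    rw [lie_exchange S (hu.commute_creation_dotProduct hZF)]
    simp_rw [hu.lie_annihilation_dotProduct hZF]
  rw [← lie_dotProduct, hZF.exchange_flipAdjoint hdag, lie_dotProduct]

theorem annihilation_mul_adjoint [RingHomInvPair σ σ] (hu : IsWellBredVector R a ad u)
    (hZF : IsCreationExchange R a ad) (hdag : IsZFAdjoint dag a ad) (m p : ι) :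
    a m * dag (u p) = exchange R (dag ∘ u) a m p :=
  calc a m * dag (u p) = dag (u p * ad m) := by rw [hdag.map_mul, hdag.map_creation]
    _ = dag (exchange (flipAdjoint σ R) ad u p m) := by
        rw [hu.mul_creation, hu.exchange_flipAdjoint hZF hdag]
    _ = exchange R (dag ∘ u) a m p := by
        rw [map_exchange hdag.map_mul, flipAdjoint_flipAdjoint, hdag.comp_creation]

theorem commute_adjoint_dotProduct_annihilation [RingHomInvPair σ σ]
    (hu : IsWellBredVector R a ad u) (hv : IsWellBredVector R a ad v)
    (hZF : IsCreationExchange R a ad) (hdag : IsZFAdjoint dag a ad) (m : ι) :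
    Commute (dag ∘ u ⬝ᵥ v) (a m) :=
  calc (dag ∘ u ⬝ᵥ v) * a m = exchange R (dag ∘ u) a m ⬝ᵥ v :=
        dotProduct_mul_eq_exchange_dotProduct (fun k => hv.mul_annihilation k m) _
    _ = a m * (dag ∘ u ⬝ᵥ v) := by
        simp_rw [dotProduct, Finset.mul_sum, ← mul_assoc, Function.comp_apply,
          hu.annihilation_mul_adjoint hZF hdag]

theorem commute_adjoint_dotProduct_creation (hu : IsWellBredVector R a ad u)
    (hv : IsWellBredVector R a ad v) (hZF : IsCreationExchange R a ad)
    (hdag : IsZFAdjoint dag a ad) (m : ι) : Commute (dag ∘ u ⬝ᵥ v) (ad m) :=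
  calc (dag ∘ u ⬝ᵥ v) * ad m = dag ∘ u ⬝ᵥ fun k => exchange (flipAdjoint σ R) ad v k m := by
        simp_rw [hv.exchange_flipAdjoint hZF hdag, dotProduct, Finset.sum_mul, mul_assoc,
          hv.mul_creation]
    _ = ad m * (dag ∘ u ⬝ᵥ v) :=
        (mul_dotProduct_eq_dotProduct_exchange (hu.creation_mul_adjoint hdag m) v).symm

end IsWellBredVector

/-- The entries of `L†L` are the products `dag ∘ u ⬝ᵥ v` for columns `u` and `v` of `L`. -/
theorem LdagL_central_general [RingHomInvPair σ σ] (hZF : IsCreationExchange R a ad)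
    (hdag : IsZFAdjoint dag a ad) (hu : IsWellBredVector R a ad u)
    (hv : IsWellBredVector R a ad v) (m : ι) :
    Commute (dag ∘ u ⬝ᵥ v) (a m) ∧ Commute (dag ∘ u ⬝ᵥ v) (ad m) :=
  ⟨hu.commute_adjoint_dotProduct_annihilation hv hZF hdag m,
    hu.commute_adjoint_dotProduct_creation hv hZF hdag m⟩

end ZamolodchikovFaddeev

theorem IsZF.isCreationExchange {N : ℕ} {A : Type*} [Ring A] [Algebra ℂ A]
    {R : Fin N × Fin N → Fin N × Fin N → ℂ} {a ad : Fin N → A} (hZF : IsZF N R a ad) :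
    IsCreationExchange R a ad :=
  ⟨hZF.2.1, hZF.2.2⟩

theorem IsWellBred.isWellBredVector_column {N : ℕ} {A : Type*} [Ring A] [Algebra ℂ A]
    {R : Fin N × Fin N → Fin N × Fin N → ℂ} {a ad : Fin N → A} {L : Fin N → Fin N → A}
    (hL : IsWellBred N R a ad L) (j : Fin N) : IsWellBredVector R a ad fun k => L k j :=
  ⟨fun i m => hL.1 i j m, fun i m => (hL.2 i j m).trans Finset.sum_comm⟩

/-- For a well-bred element `L` of `A_R ⊗ End(ℂᴺ)`, the matrix entries of
`L†L` (with `L†` the entrywise adjoint transpose, `(L†)ᵢⱼ = (Lⱼᵢ)†`) are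
central in `A_R`, i.e. commute with all generators `aᵢ, aᵢ†`. -/
theorem LdagL_central (N : ℕ) {A : Type*} [Ring A] [Algebra ℂ A]
    (R : Fin N × Fin N → Fin N × Fin N → ℂ)
    (hYBE : YBEC N R) (hU : UnitarityC N R)
    (a ad : Fin N → A) (hZF : IsZF N R a ad)
    (dag : A →ₗ[ℂ] A)
    (hdagmul : ∀ x y : A, dag (x * y) = dag y * dag x) (hdag1 : dag 1 = 1)
    (hdaga : ∀ i, dag (a i) = ad i) (hdagad : ∀ i, dag (ad i) = a i)
    (L : Fin N → Fin N → A) (hwb : IsWellBred N R a ad L) :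
    ∀ i j m : Fin N,
      ((∑ k : Fin N, dag (L k i) * L k j) * a m =
        a m * ∑ k : Fin N, dag (L k i) * L k j) ∧
      ((∑ k : Fin N, dag (L k i) * L k j) * ad m =
        ad m * ∑ k : Fin N, dag (L k i) * L k j) :=
  fun i j m => LdagL_central_general hZF.isCreationExchange ⟨hdagmul, hdag1, hdaga, hdagad⟩
    (hwb.isWellBredVector_column i) (hwb.isWellBredVector_column j) m
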